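/- Let p be a prime, k ≥ 1, and n ∈ ℕ. Let F be a field of characteristic p containing a subfield F₀ with exactly p^k elements. Let f ∈ F[x_1,…,x_n] be a polynomial of total degree at most D all of whose coefficients lie in F₀, and let β ∈ F \ F₀. Then f − β has no zero in {0,1}^n, and there exist polynomials A, B_1,…,B_n ∈ F[x_1,…,x_n] such that A·(f − β) + Σ_{j=1}^n B_j·(x_j² − x_j) = 1, with deg A ≤ k(p−1)·D and deg B_j ≤ k(p−1)·D + 2D for every j. -/

import Mathlib

open MvPolynomial in
lemma aux_eval_mem {n : ℕ} {F : Type*} [Field F] (F₀ : Subfield F) (f : MvPolynomial (Fin n) F)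
    (hcoeff : ∀ m, f.coeff m ∈ F₀) (a : Fin n → F) (ha : ∀ i, a i = 0 ∨ a i = 1) :
    eval a f ∈ F₀ := by
  rw [eval_eq]
  refine sum_mem fun m _ => mul_mem (hcoeff m) (prod_mem fun i _ => pow_mem ?_ _)
  rcases ha i with h | h <;> rw [h]
  · exact zero_mem _
  · exact one_mem _

lemma aux_pow_card {F : Type*} [Field F] (F₀ : Subfield F) (q : ℕ) (hq : 1 < q)
    (hF₀ : Nat.card F₀ = q) (c : F) (hc : c ∈ F₀) : c ^ q = c := by
  have : Finite F₀ := Nat.finite_of_card_ne_zero (by omega)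
  have := Fintype.ofFinite F₀
  have h := FiniteField.pow_card (⟨c, hc⟩ : F₀)
  rw [← Nat.card_eq_fintype_card, hF₀] at h
  exact congrArg Subtype.val h

lemma aux_ne {F : Type*} [Field F] (F₀ : Subfield F) (q : ℕ) (hq : 1 < q)
    (hF₀ : Nat.card F₀ = q) (β : F) (hβ : β ∉ F₀) : β ^ q ≠ β := by
  classical
  intro h
  have : Finite F₀ := Nat.finite_of_card_ne_zero (by omega)
  have := Fintype.ofFinite F₀
  let S : Finset F := Finset.univ.map ⟨(Subtype.val : F₀ → F), Subtype.val_injective⟩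
  have hS : S.card = q := by simp [S, ← Nat.card_eq_fintype_card, hF₀]
  have hβS : β ∉ S := by simp [S, hβ]
  have hne := FiniteField.X_pow_card_sub_X_ne_zero F hq
  have hsub : insert β S ⊆ (Polynomial.X ^ q - Polynomial.X : Polynomial F).roots.toFinset := by
    intro x hx
    have hx' : x ^ q = x := by
      rcases Finset.mem_insert.1 hx with rfl | hx
      · exact h
      · obtain ⟨y, -, rfl⟩ := Finset.mem_map.1 hx
        exact aux_pow_card F₀ q hq hF₀ _ y.2
    simp [hne, hx']
  have h1 := Finset.card_le_card hsub
  rw [Finset.card_insert_of_notMem hβS, hS] at h1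
  have h2 := Multiset.toFinset_card_le (Polynomial.X ^ q - Polynomial.X : Polynomial F).roots
  have h3 := Polynomial.card_roots' (Polynomial.X ^ q - Polynomial.X : Polynomial F)
  rw [FiniteField.X_pow_card_sub_X_natDegree_eq F hq] at h3
  omega

lemma aux_prod {F : Type*} [Field F] (p : ℕ) (hp : 1 ≤ p) (y : F) (k : ℕ) :
    (∏ i ∈ Finset.range k, (y ^ p ^ i) ^ (p - 1)) * y = y ^ p ^ k := by
  induction k with
  | zero => simp
  | succ k ih =>
    rw [Finset.prod_range_succ, mul_right_comm, ih, ← pow_succ', Nat.sub_add_cancel hp, ← pow_mul,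
      pow_succ]

open MvPolynomial in
lemma aux_eval_map {n : ℕ} {F : Type*} [Field F] (φ : F →+* F) (f : MvPolynomial (Fin n) F)
    (a : Fin n → F) (ha : ∀ i, a i = 0 ∨ a i = 1) :
    eval a (map φ f) = φ (eval a f) := by
  have h : φ ∘ a = a := by
    funext i
    rcases ha i with h | h <;> simp [h]
  rw [eval_map, eval, coe_eval₂Hom, eval₂_comp_left, h]
  simp

open MvPolynomial in
lemma aux_deg_map {n : ℕ} {F : Type*} [Field F] (φ : F →+* F) (f : MvPolynomial (Fin n) F) :
    (map φ f).totalDegree ≤ f.totalDegree :=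
  Finset.sup_mono (support_map_subset _ _)


/-- Low-degree Nullstellensatz refutation for an unsatisfiable sparse
instance over positive characteristic: if `F` has characteristic `p` and contains a
subfield `F₀` of size `p^k`, `f` has total degree `≤ D` and all coefficients in `F₀`,
and `β ∉ F₀`, then `f - β` has no Boolean zero and there is a certificate
`A·(f - β) + ∑ j, B j·(x j² - x j) = 1` with `deg A ≤ k(p-1)D` and
`deg (B j) ≤ k(p-1)D + 2D`. -/
theorem nullstellensatz_certificate_sparse_positive_char
    (p : ℕ) (hp : p.Prime) (k : ℕ) (hk : 1 ≤ k) (n : ℕ)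
    (F : Type*) [Field F] [CharP F p]
    (F₀ : Subfield F) (hF₀ : Nat.card F₀ = p ^ k)
    (D : ℕ) (f : MvPolynomial (Fin n) F)
    (hdeg : f.totalDegree ≤ D) (hcoeff : ∀ m, f.coeff m ∈ F₀)
    (β : F) (hβ : β ∉ F₀) :
    (∀ a : Fin n → F, (∀ i, a i = 0 ∨ a i = 1) →
      MvPolynomial.eval a (f - MvPolynomial.C β) ≠ 0) ∧
    ∃ (A : MvPolynomial (Fin n) F) (B : Fin n → MvPolynomial (Fin n) F),
      A * (f - MvPolynomial.C β) +
          ∑ j, B j * (MvPolynomial.X j ^ 2 - MvPolynomial.X j) = 1 ∧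
      A.totalDegree ≤ k * (p - 1) * D ∧
      ∀ j, (B j).totalDegree ≤ k * (p - 1) * D + 2 * D := by
  classical
  have : Fact p.Prime := ⟨hp⟩
  have hp1 := hp.one_lt
  have hq : 1 < p ^ k := Nat.one_lt_pow (by omega) hp1
  refine ⟨?_, ?_⟩
  · intro a ha h
    rw [map_sub, MvPolynomial.eval_C, sub_eq_zero] at h
    exact hβ (h ▸ aux_eval_mem F₀ f hcoeff a ha)
  have hγ : β - β ^ p ^ k ≠ 0 := sub_ne_zero.2 (aux_ne F₀ _ hq hF₀ β hβ).symm
  obtain ⟨A, hA⟩ : ∃ A : MvPolynomial (Fin n) F, A = MvPolynomial.C (β - β ^ p ^ k)⁻¹ *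
    (∏ i ∈ Finset.range k, (MvPolynomial.map (iterateFrobenius F p i) f
      - MvPolynomial.C (β ^ p ^ i)) ^ (p - 1) - MvPolynomial.C 1) := ⟨_, rfl⟩
  have hAdeg : A.totalDegree ≤ k * (p - 1) * D := by
    rw [hA]
    refine (MvPolynomial.totalDegree_mul _ _).trans ?_
    rw [MvPolynomial.totalDegree_C, zero_add]
    refine (MvPolynomial.totalDegree_sub_C_le _ _).trans ?_
    refine (MvPolynomial.totalDegree_finsetProd _ _).trans ?_
    refine (Finset.sum_le_card_nsmul _ _ ((p - 1) * D) ?_).trans ?_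
    · intro i _
      refine (MvPolynomial.totalDegree_pow _ _).trans (Nat.mul_le_mul_left _ ?_)
      exact (MvPolynomial.totalDegree_sub_C_le _ _).trans ((aux_deg_map _ _).trans hdeg)
    · simp [mul_assoc]
  have hev : ∀ a : Fin n → F, (∀ i, a i ∈ ({0, 1} : Finset F)) →
      MvPolynomial.eval a (MvPolynomial.C 1 - A * (f - MvPolynomial.C β)) = 0 := by
    intro a ha
    replace ha : ∀ i, a i = 0 ∨ a i = 1 := by simpa using ha
    have hc := aux_pow_card F₀ _ hq hF₀ _ (aux_eval_mem F₀ f hcoeff a ha)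
    have hprod := aux_prod p hp.one_le (MvPolynomial.eval a f - β) k
    rw [sub_pow_char_pow, hc] at hprod
    rw [hA]
    simp only [map_sub, map_mul, map_prod, map_pow, MvPolynomial.eval_C, aux_eval_map _ f a ha,
      iterateFrobenius_def]
    simp only [sub_pow_char_pow] at hprod
    rw [mul_assoc, sub_mul, hprod, one_mul]
    rw [show MvPolynomial.eval a f - β ^ p ^ k - (MvPolynomial.eval a f - β) = β - β ^ p ^ k by ring,
      inv_mul_cancel₀ hγ, sub_self]
  obtain ⟨h, hd, he⟩ := MvPolynomial.combinatorial_nullstellensatz_exists_linearCombination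
    (fun _ : Fin n => ({0, 1} : Finset F)) (fun _ => by simp) _ hev
  have hP : ∀ j : Fin n, (∏ s ∈ ({0, 1} : Finset F), (MvPolynomial.X j - MvPolynomial.C s)) =
      (MvPolynomial.X j ^ 2 - MvPolynomial.X j : MvPolynomial (Fin n) F) := by
    intro j
    rw [Finset.prod_pair zero_ne_one]
    simp only [map_zero, map_one]
    ring
  have hPne : ∀ j : Fin n, (∏ s ∈ ({0, 1} : Finset F),
      (MvPolynomial.X j - MvPolynomial.C s : MvPolynomial (Fin n) F)) ≠ 0 := by
    intro j
    refine Finset.prod_ne_zero_iff.2 fun s _ h0 => ?_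
    have := congrArg (MvPolynomial.eval (fun _ => s + 1)) h0
    simp at this
  refine ⟨A, h, ?_, hAdeg, ?_⟩
  · rw [Finsupp.linearCombination_apply, Finsupp.sum_fintype _ _ (by simp)] at he
    simp only [hP, smul_eq_mul] at he
    rw [← he, map_one]
    ring
  · intro j
    by_cases hj : h j = 0
    · simp [hj]
    have h1 := hd j
    rw [MvPolynomial.totalDegree_mul_of_isDomain (hPne j) hj] at h1
    have h2 : (MvPolynomial.C 1 - A * (f - MvPolynomial.C β)).totalDegree
        ≤ k * (p - 1) * D + D := by
      refine (MvPolynomial.totalDegree_sub _ _).trans (max_le (by simp) ?_)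
      refine (MvPolynomial.totalDegree_mul _ _).trans (add_le_add hAdeg ?_)
      exact (MvPolynomial.totalDegree_sub_C_le _ _).trans hdeg
    omega
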